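/- For every T > 0, ∫_0^T E₁(T−t) F(t) dt = 1. Consequently, for every α > 0 the kernels k_α(x,y) = F((x−y)/α) and k'_α(x,y) = (1/α) E₁((x−y)/α) on Ω = {(x,y) ∈ [0,1]² : x > y} satisfy, with weight ω ≡ 1, δ_{k_α,k'_α}(x,y) = δ_{k'_α,k_α}(x,y) = 1 for all (x,y) ∈ Ω, i.e. k_α and k'_α are conjugate. -/

import Mathlib

open MeasureTheory Set

noncomputable section

/-- the exponential integral function `E₁(x) = ∫_x^∞ e^{−t}/t dt`. -/
def E1 (x : ℝ) : ℝ := ∫ t in Ioi x, Real.exp (-t) / t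

/-- `F(t) = (∫_0^∞ t^{s−1}/Γ(s) ds) e^{−t}`. -/
def Ffun (t : ℝ) : ℝ := (∫ s in Ioi (0:ℝ), t ^ (s - 1) / Real.Gamma s) * Real.exp (-t)
/-- `δ_{k₁,k₂}(x,y) = ∫_y^x k₁(x,z) k₂(z,y) ω(z) dz` with weight `ω ≡ 1`. -/
def deltaK (k₁ k₂ : ℝ → ℝ → ℝ) (x y : ℝ) : ℝ :=
  ∫ z in y..x, k₁ x z * k₂ z y

section Aux
open Filter Topology ENNReal ProbabilityTheory

def gr (s t : ℝ) : ℝ := if 0 < s ∧ 0 < t then t ^ (s - 1) * Real.exp (-t) / Real.Gamma s else 0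
def gg (s t : ℝ) : ℝ≥0∞ := ENNReal.ofReal (gr s t)

lemma gr_of_pos {s t : ℝ} (hs : 0 < s) (ht : 0 < t) :
    gr s t = t ^ (s - 1) * Real.exp (-t) / Real.Gamma s := if_pos ⟨hs, ht⟩

lemma gg_of_nonpos {s t : ℝ} (ht : t ≤ 0) : gg s t = 0 := by
  unfold gg gr
  rw [if_neg (by intro h; linarith [h.2])]; simp

lemma gg_measurable : Measurable (fun p : ℝ × ℝ => gg p.1 p.2) := by
  unfold gg
  apply Measurable.ennreal_ofReal
  have hm : MeasurableSet {p : ℝ × ℝ | 0 < p.1 ∧ 0 < p.2} :=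
    (measurableSet_lt measurable_const measurable_fst).inter
      (measurableSet_lt measurable_const measurable_snd)
  classical
  have := ContinuousOn.measurable_piecewise (s := {p : ℝ × ℝ | 0 < p.1 ∧ 0 < p.2})
    (f := fun p : ℝ × ℝ => p.2 ^ (p.1 - 1) * Real.exp (-p.2) / Real.Gamma p.1)
    (g := fun _ => (0:ℝ)) ?_ continuousOn_const hm
  · convert this using 1
    ext p
    simp only [gr, Set.piecewise, Set.mem_ofPred_eq]
  · apply ContinuousOn.div
    · apply ContinuousOn.mul
      · apply ContinuousOn.rpow
        · fun_prop
        · fun_prop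
        · intro p hp; left; exact hp.2.ne'
      · fun_prop
    · exact Real.differentiableOn_Gamma_Ioi.continuousOn.comp continuousOn_fst (fun p hp => hp.1)
    · intro p hp; exact (Real.Gamma_pos_of_pos hp.1).ne'

lemma gg_measurable_left (t : ℝ) : Measurable (fun s => gg s t) :=
  gg_measurable.comp (measurable_id.prodMk measurable_const)
lemma gg_measurable_right (s : ℝ) : Measurable (fun t => gg s t) :=
  gg_measurable.comp (measurable_const.prodMk measurable_id)

lemma gg_lintegral {s : ℝ} (hs : 0 < s) : ∫⁻ t, gg s t = 1 := by
  rw [← lintegral_gammaPDF_eq_one hs one_pos]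
  apply lintegral_congr_ae
  have : ∀ᵐ t : ℝ, t ≠ 0 := by simp [ae_iff]
  filter_upwards [this] with t ht
  rcases lt_or_gt_of_ne ht with h | h
  · rw [gg_of_nonpos h.le, gammaPDF_of_neg h]
  · rw [gg, gr_of_pos hs h, gammaPDF_of_nonneg h.le]
    congr 1
    simp; ring

lemma lintegral_scale (f : ℝ → ℝ≥0∞) (hf : Measurable f) {w : ℝ} (hw : 0 < w) :
    ∫⁻ t, f t = ENNReal.ofReal w * ∫⁻ x, f (w * x) := by
  conv_lhs => rw [← Real.smul_map_volume_mul_left hw.ne']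
  rw [lintegral_smul_measure, lintegral_map hf (measurable_const_mul w), abs_of_pos hw]
  rfl

lemma gg_conv {s r : ℝ} (hs : 0 < s) (hr : 0 < r) (w : ℝ) :
    ∫⁻ t, gg s t * gg r (w - t) = gg (s + r) w := by
  rcases le_or_gt w 0 with hw | hw
  · rw [gg_of_nonpos hw]
    apply lintegral_eq_zero_of_ae_eq_zero
    filter_upwards with t
    rcases le_or_gt t 0 with ht | ht
    · simp [gg_of_nonpos ht]
    · simp [gg_of_nonpos (show w - t ≤ 0 by linarith)]
  · have hm : Measurable (fun t => gg s t * gg r (w - t)) := (gg_measurable_right s).mul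
      ((gg_measurable_right r).comp (measurable_const.sub measurable_id))
    rw [lintegral_scale _ hm hw]
    have key : ∀ x, gg s (w * x) * gg r (w - w * x) =
        ENNReal.ofReal (w ^ (s + r - 2) * Real.exp (-w) / Real.Gamma (s + r)) * betaPDF s r x := by
      intro x
      rcases le_or_gt x 0 with hx | hx
      · rw [gg_of_nonpos (by nlinarith), betaPDF_eq_zero_of_nonpos hx]; simp
      rcases le_or_gt 1 x with hx1 | hx1
      · rw [gg_of_nonpos (t := w - w * x) (by nlinarith), betaPDF_eq_zero_of_one_le hx1]; simp
      have h1 : w - w * x = w * (1 - x) := by ring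
      have G1 := Real.Gamma_pos_of_pos hs
      have G2 := Real.Gamma_pos_of_pos hr
      have G3 := Real.Gamma_pos_of_pos (add_pos hs hr)
      have hx2 : 0 < 1 - x := by linarith
      rw [h1, gg, gg, gr_of_pos hs (by positivity), gr_of_pos hr (by positivity),
        betaPDF_of_pos_lt_one hx hx1, ← ENNReal.ofReal_mul (by positivity),
        ← ENNReal.ofReal_mul (by positivity)]
      congr 1
      rw [Real.mul_rpow hw.le hx.le, Real.mul_rpow hw.le hx2.le, beta]
      have e1 : w ^ (s + r - 2) = w ^ (s - 1) * w ^ (r - 1) := by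
        rw [← Real.rpow_add hw]; ring_nf
      have e2 : Real.exp (-w) = Real.exp (-(w * x)) * Real.exp (-(w * (1 - x))) := by
        rw [← Real.exp_add]; ring_nf
      rw [e1, e2]
      field_simp
    simp_rw [key]
    rw [lintegral_const_mul _ (by unfold betaPDF; fun_prop), lintegral_betaPDF_eq_one hs hr, mul_one,
      ← ENNReal.ofReal_mul hw.le, gg, gr_of_pos (add_pos hs hr) hw]
    congr 1
    have : w ^ (s + r - 1) = w * w ^ (s + r - 2) := by
      conv_rhs => rw [← Real.rpow_one w, ← Real.rpow_mul hw.le, ← Real.rpow_add hw]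
      ring_nf
    rw [this]; ring

def PP (s T : ℝ) : ℝ≥0∞ := ∫⁻ t in Iic T, gg s t
def QQ (s T : ℝ) : ℝ≥0∞ := ∫⁻ t in Ioi T, gg s t

lemma PP_add_QQ {s : ℝ} (hs : 0 < s) (T : ℝ) : PP s T + QQ s T = 1 := by
  rw [← gg_lintegral hs, PP, QQ, ← compl_Iic, lintegral_add_compl _ measurableSet_Iic]

lemma PP_shift (r T t : ℝ) : PP r (T - t) = ∫⁻ w in Iic T, gg r (w - t) := by
  rw [PP, ← lintegral_indicator measurableSet_Iic, ← lintegral_indicator measurableSet_Iic,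
    ← lintegral_sub_right_eq_self _ t]
  apply lintegral_congr
  intro w
  by_cases h : w ≤ T
  · rw [indicator_of_mem (by simpa using h), indicator_of_mem (by simpa using h)]
  · rw [indicator_of_notMem (by simpa using h), indicator_of_notMem (by simpa using h)]

lemma PP_measurable_left (T : ℝ) : Measurable (fun s => PP s T) := by
  unfold PP
  exact gg_measurable.lintegral_prod_right'

lemma PP_measurable_right (s : ℝ) : Measurable (fun T => PP s T) := by
  apply Monotone.measurable
  intro a b hab
  exact lintegral_mono_set (Iic_subset_Iic.2 hab)

lemma QQ_measurable_right (s : ℝ) : Measurable (fun T => QQ s T) := by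
  apply Antitone.measurable
  intro a b hab
  exact lintegral_mono_set (Ioi_subset_Ioi hab)

lemma PP_of_nonpos {s T : ℝ} (hT : T ≤ 0) : PP s T = 0 := by
  rw [PP]
  exact setLIntegral_eq_zero measurableSet_Iic (fun t ht => gg_of_nonpos (le_trans ht hT))

lemma PP_conv {s r : ℝ} (hs : 0 < s) (hr : 0 < r) (T : ℝ) :
    ∫⁻ t, gg s t * PP r (T - t) = PP (s + r) T := by
  have hm : Measurable (fun p : ℝ × ℝ => gg s p.1 * gg r (p.2 - p.1)) :=
    ((gg_measurable_right s).comp measurable_fst).mul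
      ((gg_measurable_right r).comp (measurable_snd.sub measurable_fst))
  calc ∫⁻ t, gg s t * PP r (T - t) = ∫⁻ t, ∫⁻ w in Iic T, gg s t * gg r (w - t) := by
        apply lintegral_congr
        intro t
        rw [PP_shift, lintegral_const_mul]
        exact (gg_measurable_right r).comp (measurable_id.sub measurable_const)
    _ = ∫⁻ w in Iic T, ∫⁻ t, gg s t * gg r (w - t) := lintegral_lintegral_swap hm.aemeasurable
    _ = PP (s + r) T := by
        simp_rw [gg_conv hs hr]; rfl

lemma PP_decomp {s r : ℝ} (hs : 0 < s) (hr : 0 < r) (T : ℝ) :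
    PP (s + r) T + ∫⁻ t in Ioo 0 T, gg s t * QQ r (T - t) = PP s T := by
  have h1 : PP (s + r) T = ∫⁻ t in Ioo 0 T, gg s t * PP r (T - t) := by
    rw [← PP_conv hs hr, ← lintegral_indicator measurableSet_Ioo]
    apply lintegral_congr
    intro t
    by_cases h : t ∈ Ioo 0 T
    · rw [indicator_of_mem h]
    · rw [indicator_of_notMem h]
      rcases le_or_gt t 0 with ht | ht
      · rw [gg_of_nonpos ht, zero_mul]
      · have : T ≤ t := by by_contra h2; exact h ⟨ht, not_le.1 h2⟩
        rw [PP_of_nonpos (by linarith), mul_zero]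
  have h2 : PP s T = ∫⁻ t in Ioo 0 T, gg s t := by
    rw [PP, ← setLIntegral_congr Iio_ae_eq_Iic, ← lintegral_indicator measurableSet_Ioo,
      ← lintegral_indicator measurableSet_Iio]
    apply lintegral_congr
    intro t
    by_cases h : t ∈ Ioo 0 T
    · rw [indicator_of_mem h, indicator_of_mem (show t ∈ Iio T from h.2)]
    · rw [indicator_of_notMem h]
      rcases le_or_gt t 0 with ht | ht
      · rw [indicator_apply]; simp [gg_of_nonpos ht]
      · rw [indicator_of_notMem]
        intro h2; exact h ⟨ht, h2⟩
  have hm : Measurable (fun t => gg s t * PP r (T - t)) := (gg_measurable_right s).mul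
      ((PP_measurable_right r).comp (measurable_const.sub measurable_id))
  rw [h1, h2, ← lintegral_add_left hm]
  simp_rw [← mul_add, PP_add_QQ hr, mul_one]

lemma PP_le {s : ℝ} (hs : 0 < s) (T : ℝ) :
    PP s T ≤ ENNReal.ofReal (Real.exp T * Real.exp (-Real.log 2 * s)) := by
  rw [PP]
  calc ∫⁻ t in Iic T, gg s t ≤ ∫⁻ t in Iic T,
        ENNReal.ofReal (Real.exp T * Real.exp (-Real.log 2 * s)) * gammaPDF s 2 t := by
        apply setLIntegral_mono' measurableSet_Iic
        intro t ht
        rcases le_or_gt t 0 with h | h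
        · rw [gg_of_nonpos h]; exact zero_le
        · have G1 := Real.Gamma_pos_of_pos hs
          rw [gg, gr_of_pos hs h, gammaPDF_of_nonneg h.le, ← ENNReal.ofReal_mul (by positivity)]
          apply ENNReal.ofReal_le_ofReal
          have e : (2:ℝ) ^ s = Real.exp (Real.log 2 * s) := Real.rpow_def_of_pos two_pos s
          have e2 : Real.exp (-Real.log 2 * s) * Real.exp (Real.log 2 * s) = 1 := by
            rw [← Real.exp_add]; simp
          have e3 : Real.exp (-t) ≤ Real.exp T * Real.exp (-(2 * t)) := by
            rw [← Real.exp_add]; apply Real.exp_le_exp.2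
            have : t ≤ T := ht
            linarith
          calc t ^ (s - 1) * Real.exp (-t) / Real.Gamma s
              ≤ t ^ (s - 1) * (Real.exp T * Real.exp (-(2 * t))) / Real.Gamma s := by gcongr
            _ = (Real.exp (-Real.log 2 * s) * Real.exp (Real.log 2 * s)) *
                (t ^ (s - 1) * (Real.exp T * Real.exp (-(2 * t))) / Real.Gamma s) := by
                  rw [e2, one_mul]
            _ = _ := by rw [e]; ring
    _ ≤ ∫⁻ t, ENNReal.ofReal (Real.exp T * Real.exp (-Real.log 2 * s)) * gammaPDF s 2 t :=
        setLIntegral_le_lintegral _ _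
    _ = _ := by
        rw [lintegral_const_mul' _ _ ENNReal.ofReal_ne_top, lintegral_gammaPDF_eq_one hs two_pos,
          mul_one]

lemma PP_fin (T : ℝ) : ∫⁻ s in Ioi 0, PP s T ≠ ∞ := by
  apply ne_of_lt
  have hi : IntegrableOn (fun s => Real.exp T * Real.exp (-Real.log 2 * s)) (Ioi 0) :=
    (exp_neg_integrableOn_Ioi 0 (Real.log_pos one_lt_two)).const_mul _
  calc ∫⁻ s in Ioi 0, PP s T ≤
        ∫⁻ s in Ioi 0, ENNReal.ofReal (Real.exp T * Real.exp (-Real.log 2 * s)) :=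
        setLIntegral_mono' measurableSet_Ioi (fun s hs => PP_le hs T)
    _ < ∞ := hi.lintegral_lt_top

def Phi (t : ℝ) : ℝ≥0∞ := ∫⁻ s in Ioi 0, gg s t

lemma Phi_measurable : Measurable Phi := by
  unfold Phi
  exact gg_measurable.lintegral_prod_left'

lemma key1 {r : ℝ} (hr : 0 < r) (T : ℝ) :
    ∫⁻ t in Ioo 0 T, Phi t * QQ r (T - t) = ∫⁻ s in Ioc 0 r, PP s T := by
  have hQ : Measurable (fun t => QQ r (T - t)) :=
    (QQ_measurable_right r).comp (measurable_const.sub measurable_id)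
  have hm : Measurable (fun p : ℝ × ℝ => gg p.2 p.1 * QQ r (T - p.1)) :=
    (gg_measurable.comp measurable_swap).mul (hQ.comp measurable_fst)
  have h1 : ∫⁻ t in Ioo 0 T, Phi t * QQ r (T - t) =
      ∫⁻ s in Ioi 0, ∫⁻ t in Ioo 0 T, gg s t * QQ r (T - t) := by
    rw [← lintegral_lintegral_swap hm.aemeasurable]
    apply lintegral_congr
    intro t
    rw [lintegral_mul_const _ (gg_measurable_left t)]; rfl
  have h2 : ∫⁻ s in Ioi 0, PP s T = (∫⁻ s in Ioi 0, PP (s + r) T) +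
      ∫⁻ s in Ioi 0, ∫⁻ t in Ioo 0 T, gg s t * QQ r (T - t) := by
    have hm2 : Measurable (fun s => PP (s + r) T) :=
      (PP_measurable_left T).comp (measurable_id.add measurable_const)
    rw [← lintegral_add_left hm2]
    apply setLIntegral_congr_fun measurableSet_Ioi
    intro s hs
    exact (PP_decomp hs hr T).symm
  have h3 : ∫⁻ s in Ioi 0, PP (s + r) T = ∫⁻ s in Ioi r, PP s T := by
    rw [← lintegral_indicator measurableSet_Ioi, ← lintegral_indicator measurableSet_Ioi,
      ← lintegral_add_right_eq_self ((Ioi r).indicator fun s => PP s T) r]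
    apply lintegral_congr
    intro s
    simp [indicator_apply]
  have h4 : ∫⁻ s in Ioi 0, PP s T = (∫⁻ s in Ioi r, PP s T) + ∫⁻ s in Ioc 0 r, PP s T := by
    rw [← Ioc_union_Ioi_eq_Ioi hr.le, lintegral_union measurableSet_Ioi, add_comm]
    exact Ioc_disjoint_Ioi le_rfl
  rw [h1]
  have h5 := h2.symm.trans h4
  rw [h3] at h5
  refine (ENNReal.add_right_inj ?_).1 h5
  intro h
  apply PP_fin T
  rw [h4, h]; simp

def qq (r u : ℝ) : ℝ≥0∞ := ∫⁻ v in Ioi u, ENNReal.ofReal (v ^ (r - 1) * Real.exp (-v))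

lemma qq_measurable (r : ℝ) : Measurable (qq r) := by
  apply Antitone.measurable
  intro a b hab
  exact lintegral_mono_set (Ioi_subset_Ioi hab)

lemma Gamma_QQ {r u : ℝ} (hr : 0 < r) (hu : 0 ≤ u) :
    ENNReal.ofReal (Real.Gamma r) * QQ r u = qq r u := by
  rw [QQ, qq, ← lintegral_const_mul' _ _ ENNReal.ofReal_ne_top]
  apply setLIntegral_congr_fun measurableSet_Ioi
  intro v hv
  have hv0 : 0 < v := lt_of_le_of_lt hu hv
  have G1 := Real.Gamma_pos_of_pos hr
  simp only
  rw [gg, gr_of_pos hr hv0, ← ENNReal.ofReal_mul G1.le]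
  congr 1
  field_simp

lemma qq_one_le {u : ℝ} (hu : 0 ≤ u) : qq 1 u ≤ 1 := by
  rw [← Gamma_QQ one_pos hu, Real.Gamma_one, ENNReal.ofReal_one, one_mul,
    ← PP_add_QQ one_pos u]
  exact le_add_self

lemma pow_bound {r v : ℝ} (hr : 0 < r) (hr1 : r ≤ 1) (hv : 0 < v) :
    ENNReal.ofReal (v ^ (r - 1) * Real.exp (-v)) ≤
      ENNReal.ofReal (v ^ ((0:ℝ) - 1) * Real.exp (-v)) +
      ENNReal.ofReal (v ^ ((1:ℝ) - 1) * Real.exp (-v)) := by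
  rw [← ENNReal.ofReal_add (by positivity) (by positivity), ← add_mul]
  apply ENNReal.ofReal_le_ofReal
  apply mul_le_mul_of_nonneg_right _ (Real.exp_pos _).le
  have p0 : 0 < v ^ ((0:ℝ) - 1) := by positivity
  have p1 : 0 < v ^ ((1:ℝ) - 1) := by positivity
  rcases le_total v 1 with h | h
  · have := Real.rpow_le_rpow_of_exponent_ge hv h (show (0:ℝ) - 1 ≤ r - 1 by linarith)
    linarith
  · have := Real.rpow_le_rpow_of_exponent_le h (show r - 1 ≤ (1:ℝ) - 1 by linarith)
    linarith

lemma pw_meas (r : ℝ) : Measurable (fun v : ℝ => ENNReal.ofReal (v ^ (r - 1) * Real.exp (-v))) := by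
  fun_prop

lemma qq_bound {r u : ℝ} (hr : 0 < r) (hr1 : r ≤ 1) (hu : 0 ≤ u) : qq r u ≤ qq 0 u + 1 := by
  refine le_trans ?_ (add_le_add le_rfl (qq_one_le hu))
  unfold qq
  rw [← lintegral_add_left (pw_meas 0)]
  apply setLIntegral_mono' measurableSet_Ioi
  intro v hv
  exact pow_bound hr hr1 (lt_of_le_of_lt hu hv)

lemma qq_zero_fin {u : ℝ} (hu : 0 < u) : qq 0 u ≠ ∞ := by
  apply ne_of_lt
  calc qq 0 u ≤ ∫⁻ v in Ioi u, ENNReal.ofReal u⁻¹ *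
        ENNReal.ofReal (v ^ ((1:ℝ) - 1) * Real.exp (-v)) := by
        apply setLIntegral_mono' measurableSet_Ioi
        intro v hv
        have hv0 : 0 < v := lt_trans hu hv
        rw [← ENNReal.ofReal_mul (by positivity)]
        apply ENNReal.ofReal_le_ofReal
        rw [← mul_assoc]
        apply mul_le_mul_of_nonneg_right _ (Real.exp_pos _).le
        simp only [zero_sub, sub_self, Real.rpow_zero, mul_one, Real.rpow_neg_one]
        exact inv_anti₀ hu (le_of_lt hv)
    _ = ENNReal.ofReal u⁻¹ * qq 1 u := by
        rw [lintegral_const_mul' _ _ ENNReal.ofReal_ne_top]; rfl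
    _ < ∞ := ENNReal.mul_lt_top ENNReal.ofReal_lt_top
        (lt_of_le_of_lt (qq_one_le hu.le) ENNReal.one_lt_top)

lemma ev_small : ∀ᶠ r in 𝓝[>] (0:ℝ), 0 < r ∧ r ≤ 1 := by
  filter_upwards [Ioc_mem_nhdsGT (one_pos)] with r hr using hr

lemma qq_tendsto {u : ℝ} (hu : 0 < u) : Tendsto (fun r => qq r u) (𝓝[>] 0) (𝓝 (qq 0 u)) := by
  unfold qq
  apply tendsto_lintegral_filter_of_dominated_convergence
    (fun v => ENNReal.ofReal (v ^ ((0:ℝ) - 1) * Real.exp (-v)) +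
      ENNReal.ofReal (v ^ ((1:ℝ) - 1) * Real.exp (-v)))
  · exact Eventually.of_forall pw_meas
  · filter_upwards [ev_small] with r hr
    filter_upwards [ae_restrict_mem measurableSet_Ioi] with v hv
    exact pow_bound hr.1 hr.2 (lt_trans hu hv)
  · rw [lintegral_add_left (pw_meas 0)]
    exact ENNReal.add_ne_top.2 ⟨qq_zero_fin hu,
      ne_top_of_le_ne_top ENNReal.one_ne_top (qq_one_le hu.le)⟩
  · filter_upwards [ae_restrict_mem measurableSet_Ioi] with v hv
    have hv0 : 0 < v := lt_trans hu hv
    apply tendsto_nhdsWithin_of_tendsto_nhds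
    have hc : Continuous (fun r : ℝ => ENNReal.ofReal (v ^ (r - 1) * Real.exp (-v))) := by
      apply ENNReal.continuous_ofReal.comp
      apply Continuous.mul _ continuous_const
      exact continuous_const.rpow (by fun_prop) (fun _ => Or.inl hv0.ne')
    exact hc.tendsto 0

lemma Gamma_tend : Tendsto (fun r : ℝ => Real.Gamma (r + 1)) (𝓝[>] 0) (𝓝 1) := by
  apply tendsto_nhdsWithin_of_tendsto_nhds
  have h : ContinuousAt Real.Gamma (0 + 1) :=
    (Real.differentiableOn_Gamma_Ioi.continuousOn).continuousAt (Ioi_mem_nhds (by norm_num))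
  have h2 : ContinuousAt (fun r : ℝ => Real.Gamma (r + 1)) 0 :=
    ContinuousAt.comp (f := fun r : ℝ => r + 1) (g := Real.Gamma) h (by fun_prop)
  simpa [ContinuousAt] using h2

lemma PP_lower {T : ℝ} (hT : 0 < T) : ∃ C : ℝ, ∃ δ : ℝ, 0 < δ ∧ ∀ s, 0 < s → s < δ →
    ENNReal.ofReal (1 - C * s) ≤ PP s T := by
  have h1 : ∀ᶠ r in 𝓝[>] (0:ℝ), (1/2 : ℝ) < Real.Gamma (r + 1) :=
    Gamma_tend.eventually (lt_mem_nhds (by norm_num))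
  have h2 := h1.and ev_small
  obtain ⟨δ, hδ, h3⟩ := mem_nhdsGT_iff_exists_Ioo_subset.1 h2
  set D := (qq 0 T + 1).toReal with hD
  refine ⟨2 * D, δ, hδ, fun s hs hsδ => ?_⟩
  obtain ⟨hG, -, hs1⟩ := h3 ⟨hs, hsδ⟩
  have hfin : qq 0 T + 1 ≠ ∞ := ENNReal.add_ne_top.2 ⟨qq_zero_fin hT, ENNReal.one_ne_top⟩
  have hb := (Gamma_QQ hs hT.le).trans_le (qq_bound hs hs1 hT.le)
  have hsum := PP_add_QQ hs T
  have hPf : PP s T ≠ ∞ := ne_top_of_le_ne_top ENNReal.one_ne_top (hsum ▸ le_self_add)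
  have hQf : QQ s T ≠ ∞ := ne_top_of_le_ne_top ENNReal.one_ne_top (hsum ▸ le_add_self)
  have hb' : Real.Gamma s * (QQ s T).toReal ≤ D := by
    have := ENNReal.toReal_mono hfin hb
    rwa [ENNReal.toReal_mul, ENNReal.toReal_ofReal (Real.Gamma_pos_of_pos hs).le] at this
  have hsum' : (PP s T).toReal + (QQ s T).toReal = 1 := by
    rw [← ENNReal.toReal_add hPf hQf, hsum, ENNReal.toReal_one]
  rw [Real.Gamma_add_one hs.ne'] at hG
  apply ENNReal.ofReal_le_of_le_toReal
  have hQ0 : 0 ≤ (QQ s T).toReal := ENNReal.toReal_nonneg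
  have : (1/2) * (QQ s T).toReal ≤ s * D := by
    calc (1/2) * (QQ s T).toReal ≤ (s * Real.Gamma s) * (QQ s T).toReal := by gcongr
      _ = s * (Real.Gamma s * (QQ s T).toReal) := by ring
      _ ≤ s * D := by gcongr
  linarith

lemma key2 {r T : ℝ} (hr : 0 < r) :
    ∫⁻ t in Ioo 0 T, Phi t * qq r (T - t) =
      ENNReal.ofReal (Real.Gamma r) * ∫⁻ s in Ioc 0 r, PP s T := by
  rw [← key1 hr, ← lintegral_const_mul' _ _ ENNReal.ofReal_ne_top]
  apply setLIntegral_congr_fun measurableSet_Ioo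
  intro t ht
  simp only
  rw [← Gamma_QQ hr (by linarith [ht.2])]
  ring

lemma key3 {T : ℝ} (hT : 0 < T) :
    Tendsto (fun r => ∫⁻ t in Ioo 0 T, Phi t * qq r (T - t)) (𝓝[>] 0) (𝓝 1) := by
  obtain ⟨C, δ, hδ, hC⟩ := PP_lower hT
  have hup : Tendsto (fun r : ℝ => ENNReal.ofReal (Real.Gamma (r + 1))) (𝓝[>] 0) (𝓝 1) := by
    simpa using ENNReal.tendsto_ofReal Gamma_tend
  have hlo : Tendsto (fun r : ℝ => ENNReal.ofReal (Real.Gamma (r + 1) * (1 - |C| * r)))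
      (𝓝[>] 0) (𝓝 1) := by
    have : Tendsto (fun r : ℝ => 1 - |C| * r) (𝓝[>] 0) (𝓝 1) := by
      apply tendsto_nhdsWithin_of_tendsto_nhds
      have : Continuous (fun r : ℝ => 1 - |C| * r) := by fun_prop
      simpa using this.tendsto 0
    simpa using ENNReal.tendsto_ofReal (Gamma_tend.mul this)
  apply tendsto_of_tendsto_of_tendsto_of_le_of_le' hlo hup
  · filter_upwards [Ioo_mem_nhdsGT hδ] with r hr
    rw [key2 hr.1]
    have G1 := Real.Gamma_pos_of_pos hr.1
    calc ENNReal.ofReal (Real.Gamma (r + 1) * (1 - |C| * r))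
        = ENNReal.ofReal (Real.Gamma r) * (ENNReal.ofReal (1 - |C| * r) * ENNReal.ofReal r) := by
          rw [← ENNReal.ofReal_mul' hr.1.le, ← ENNReal.ofReal_mul G1.le,
            Real.Gamma_add_one hr.1.ne']
          congr 1; ring
      _ = ENNReal.ofReal (Real.Gamma r) * ∫⁻ s in Ioc 0 r, ENNReal.ofReal (1 - |C| * r) := by
          rw [setLIntegral_const, Real.volume_Ioc, sub_zero]
      _ ≤ _ := by
          refine mul_le_mul' le_rfl ?_
          apply setLIntegral_mono' measurableSet_Ioc
          intro s hs
          refine le_trans ?_ (hC s hs.1 (lt_of_le_of_lt hs.2 hr.2))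
          apply ENNReal.ofReal_le_ofReal
          have h1 : C * s ≤ |C| * s := mul_le_mul_of_nonneg_right (le_abs_self C) hs.1.le
          have h2 : |C| * s ≤ |C| * r := mul_le_mul_of_nonneg_left hs.2 (abs_nonneg C)
          linarith
  · filter_upwards [Ioo_mem_nhdsGT hδ] with r hr
    rw [key2 hr.1]
    have G1 := Real.Gamma_pos_of_pos hr.1
    calc ENNReal.ofReal (Real.Gamma r) * ∫⁻ s in Ioc 0 r, PP s T
        ≤ ENNReal.ofReal (Real.Gamma r) * ∫⁻ s in Ioc 0 r, 1 := by
          refine mul_le_mul' le_rfl ?_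
          apply setLIntegral_mono' measurableSet_Ioc
          intro s hs
          rw [← PP_add_QQ hs.1 T]
          exact le_self_add
      _ = ENNReal.ofReal (Real.Gamma (r + 1)) := by
          rw [setLIntegral_const, Real.volume_Ioc, sub_zero, one_mul, ← ENNReal.ofReal_mul G1.le,
            Real.Gamma_add_one hr.1.ne', mul_comm]

lemma Phi_fin (T : ℝ) : ∫⁻ t in Ioo 0 T, Phi t ≠ ∞ := by
  apply ne_top_of_le_ne_top (PP_fin T)
  have hm : Measurable (fun p : ℝ × ℝ => gg p.2 p.1) := gg_measurable.comp measurable_swap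
  calc ∫⁻ t in Ioo 0 T, Phi t = ∫⁻ s in Ioi 0, ∫⁻ t in Ioo 0 T, gg s t :=
        lintegral_lintegral_swap hm.aemeasurable
    _ ≤ _ := by
        apply lintegral_mono
        intro s
        exact lintegral_mono_set (fun t ht => ht.2.le)

lemma mm (r T : ℝ) : Measurable (fun t => Phi t * qq r (T - t)) :=
  Phi_measurable.mul ((qq_measurable r).comp (measurable_const.sub measurable_id))

lemma key4 {T : ℝ} (hT : 0 < T) : ∫⁻ t in Ioo 0 T, Phi t * qq 0 (T - t) = 1 := by
  have hPhi : ∀ᵐ t ∂(volume.restrict (Ioo 0 T)), Phi t < ∞ :=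
    ae_lt_top Phi_measurable (Phi_fin T)
  have hlim : ∀ᵐ t ∂(volume.restrict (Ioo 0 T)),
      Tendsto (fun r => Phi t * qq r (T - t)) (𝓝[>] 0) (𝓝 (Phi t * qq 0 (T - t))) := by
    filter_upwards [hPhi, ae_restrict_mem measurableSet_Ioo] with t ht htm
    exact ENNReal.Tendsto.const_mul (qq_tendsto (by linarith [htm.2])) (Or.inr ht.ne)
  have hF : ∫⁻ t in Ioo 0 T, Phi t * qq 0 (T - t) ≤ 1 := by
    calc ∫⁻ t in Ioo 0 T, Phi t * qq 0 (T - t)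
        = ∫⁻ t in Ioo 0 T, liminf (fun r => Phi t * qq r (T - t)) (𝓝[>] 0) := by
          apply lintegral_congr_ae
          filter_upwards [hlim] with t ht using ht.liminf_eq.symm
      _ ≤ liminf (fun r => ∫⁻ t in Ioo 0 T, Phi t * qq r (T - t)) (𝓝[>] 0) :=
          lintegral_liminf_le (fun r => mm r T)
      _ = 1 := (key3 hT).liminf_eq
  refine tendsto_nhds_unique ?_ (key3 hT)
  apply tendsto_lintegral_filter_of_dominated_convergence
    (fun t => Phi t * qq 0 (T - t) + Phi t)
  · exact Eventually.of_forall (fun r => mm r T)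
  · filter_upwards [ev_small] with r hr
    filter_upwards [ae_restrict_mem measurableSet_Ioo] with t ht
    calc Phi t * qq r (T - t) ≤ Phi t * (qq 0 (T - t) + 1) := by
          gcongr; exact qq_bound hr.1 hr.2 (by linarith [ht.2])
      _ = _ := by rw [mul_add, mul_one]
  · rw [lintegral_add_left (mm 0 T)]
    exact ENNReal.add_ne_top.2 ⟨ne_top_of_le_ne_top ENNReal.one_ne_top hF, Phi_fin T⟩
  · exact hlim

lemma E1_eq {x : ℝ} (hx : 0 < x) : E1 x = (qq 0 x).toReal := by
  rw [E1, qq, integral_eq_lintegral_of_nonneg_ae]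
  · congr 1
    apply setLIntegral_congr_fun measurableSet_Ioi
    intro v hv
    simp only [zero_sub, Real.rpow_neg_one]
    congr 1; ring
  · filter_upwards [ae_restrict_mem measurableSet_Ioi] with v hv
    have : 0 < v := lt_trans hx hv
    show 0 ≤ Real.exp (-v) / v
    positivity
  · exact Measurable.aestronglyMeasurable (by fun_prop)

lemma Ffun_eq {t : ℝ} (ht : 0 < t) : Ffun t = (Phi t).toReal := by
  have h0 : ∀ s ∈ Ioi (0:ℝ), t ^ (s - 1) / Real.Gamma s * Real.exp (-t) = gr s t := by
    intro s hs
    rw [gr_of_pos hs ht]; ring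
  have hm : Measurable (fun s => gr s t) := by
    have h := (gg_measurable_left t).ennreal_toReal
    convert h using 2 with s
    rw [gg, ENNReal.toReal_ofReal]
    unfold gr
    split_ifs with h
    · have := Real.Gamma_pos_of_pos h.1
      have := h.2
      positivity
    · exact le_rfl
  rw [Ffun, Phi, ← integral_mul_const, setIntegral_congr_fun measurableSet_Ioi h0,
    integral_eq_lintegral_of_nonneg_ae]
  · rfl
  · filter_upwards [ae_restrict_mem measurableSet_Ioi] with s hs
    have := Real.Gamma_pos_of_pos hs
    show 0 ≤ gr s t
    rw [gr_of_pos hs ht]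
    positivity
  · exact hm.aestronglyMeasurable

lemma main1 {T : ℝ} (hT : 0 < T) : (∫ t in (0:ℝ)..T, E1 (T - t) * Ffun t) = 1 := by
  rw [intervalIntegral.integral_of_le hT.le, integral_Ioc_eq_integral_Ioo]
  have h : ∀ t ∈ Ioo 0 T, E1 (T - t) * Ffun t = (Phi t * qq 0 (T - t)).toReal := by
    intro t ht
    rw [E1_eq (by linarith [ht.2]), Ffun_eq ht.1, ENNReal.toReal_mul, mul_comm]
  rw [setIntegral_congr_fun measurableSet_Ioo h, integral_toReal (mm 0 T).aemeasurable, key4 hT,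
    ENNReal.toReal_one]
  apply ae_lt_top (mm 0 T)
  rw [key4 hT]; exact ENNReal.one_ne_top

lemma main2 {α : ℝ} (hα : 0 < α) {x y : ℝ} (hxy : y < x) :
    deltaK (fun x y => Ffun ((x - y) / α)) (fun x y => (1 / α) * E1 ((x - y) / α)) x y = 1 := by
  have hT : 0 < (x - y) / α := div_pos (by linarith) hα
  have hR : (∫ t in (0:ℝ)..(x - y) / α, 1 / α * (E1 ((x - y) / α - t) * Ffun t)) = 1 / α * 1 := by
    rw [intervalIntegral.integral_const_mul, main1 hT]
  unfold deltaK
  have h := intervalIntegral.integral_comp_sub_div (a := y) (b := x)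
    (fun t => 1 / α * (E1 ((x - y) / α - t) * Ffun t)) hα.ne' (x / α)
  rw [← sub_div, ← sub_div, sub_self, zero_div, hR] at h
  refine Eq.trans ?_ (h.trans (by simp [hα.ne']))
  apply intervalIntegral.integral_congr
  intro z _
  simp only
  rw [show (x - y) / α - (x / α - z / α) = (z - y) / α by ring,
    show x / α - z / α = (x - z) / α by ring]
  ring

lemma main3 {α : ℝ} (hα : 0 < α) {x y : ℝ} (hxy : y < x) :
    deltaK (fun x y => (1 / α) * E1 ((x - y) / α)) (fun x y => Ffun ((x - y) / α)) x y = 1 := by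
  have hT : 0 < (x - y) / α := div_pos (by linarith) hα
  have hR : (∫ t in (0:ℝ)..(x - y) / α, 1 / α * (E1 ((x - y) / α - t) * Ffun t)) = 1 / α * 1 := by
    rw [intervalIntegral.integral_const_mul, main1 hT]
  unfold deltaK
  have h := intervalIntegral.integral_comp_div_sub (a := y) (b := x)
    (fun t => 1 / α * (E1 ((x - y) / α - t) * Ffun t)) hα.ne' (y / α)
  rw [← sub_div, ← sub_div, sub_self, zero_div, hR] at h
  refine Eq.trans ?_ (h.trans (by simp [hα.ne']))
  apply intervalIntegral.integral_congr
  intro z _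
  simp only
  rw [show (x - y) / α - (z / α - y / α) = (x - z) / α by ring,
    show z / α - y / α = (z - y) / α by ring]
  ring

end Aux

/-- the Sonine-type identity `∫_0^T E₁(T−t) F(t) dt = 1` for every `T > 0`;
consequently, for every `α > 0`, the kernels `k_α(x,y) = F((x−y)/α)` and
`k'_α(x,y) = (1/α) E₁((x−y)/α)` on `Ω = {(x,y) ∈ [0,1]² : x > y}` are conjugate (weight
`ω ≡ 1`): `δ_{k_α,k'_α} = δ_{k'_α,k_α} ≡ 1` on `Ω`. -/
theorem stmt15 :
    (∀ T : ℝ, 0 < T → (∫ t in (0:ℝ)..T, E1 (T - t) * Ffun t) = 1) ∧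
    (∀ α : ℝ, 0 < α → ∀ x y : ℝ, 0 ≤ y → y < x → x ≤ 1 →
      deltaK (fun x y => Ffun ((x - y) / α)) (fun x y => (1 / α) * E1 ((x - y) / α)) x y = 1 ∧
      deltaK (fun x y => (1 / α) * E1 ((x - y) / α)) (fun x y => Ffun ((x - y) / α)) x y = 1) := by
  exact ⟨fun T hT => main1 hT, fun α hα x y _ hxy _ => ⟨main2 hα hxy, main3 hα hxy⟩⟩

end
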